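/- arXiv:1402.2936 — 8 statements merged into one kernel-verified Lean document; each statement's English description precedes it below -/
import Mathlib

section
/- Let A ∈ ℂ^{M×d}, let Φ = diag(e^{iμ_1},…,e^{iμ_d}) and Ψ = diag(e^{iφ_1},…,e^{iφ_d}) with all μ_i, φ_i real, and let J_1, J_2 be real M'×M matrices satisfying the shift invariance relation J_1·A·Φ = J_2·A. Then the augmented steering matrix A^{nc} = [A ; Π_M·conj(A)·conj(Ψ)·conj(Ψ)] ∈ ℂ^{2M×d} (vertical block stacking) satisfies the augmented shift invariance relation J_1^{nc}·A^{nc}·Φ = J_2^{nc}·A^{nc}, where J_1^{nc} = blkdiag(J_1, Π_{M'}·J_2·Π_M) and J_2^{nc} = blkdiag(J_2, Π_{M'}·J_1·Π_M) are the 2M'×2M block-diagonal augmented selection matrices. -/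
open Matrix Complex

/-- The `n × n` exchange matrix with ones on the antidiagonal and zeros elsewhere. -/
def exchg (R : Type*) [Zero R] [One R] (n : ℕ) : Matrix (Fin n) (Fin n) R :=
  Matrix.of fun i j => if (i : ℕ) + (j : ℕ) = n - 1 then (1 : R) else 0

/-- The exchange matrix is an involution. -/
theorem exchg_mul_self_aux (n : ℕ) : exchg ℂ n * exchg ℂ n = 1 := by
  ext i j
  rw [Matrix.mul_apply, Finset.sum_eq_single (Fin.rev i)]
  · have hi := i.isLt
    have hj := j.isLt
    have h1 : (i : ℕ) + ((Fin.rev i : Fin n) : ℕ) = n - 1 := by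
      rw [Fin.val_rev]; omega
    have h2 : (((Fin.rev i : Fin n) : ℕ) + (j : ℕ) = n - 1) ↔ i = j := by
      rw [Fin.val_rev, Fin.ext_iff]; omega
    simp only [exchg, Matrix.of_apply, h1, h2, if_true, one_mul, Matrix.one_apply]
  · intro b _ hb
    have h1 : ¬ ((i : ℕ) + (b : ℕ) = n - 1) := by
      intro h
      apply hb
      rw [Fin.ext_iff, Fin.val_rev]
      omega
    simp [exchg, h1]
  · intro h
    exact absurd (Finset.mem_univ _) h

/-- if `J₁ A Φ = J₂ A` (shift invariance), then the augmented steering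
matrix `A^{nc} = [A ; Π_M conj(A) conj(Ψ) conj(Ψ)]` satisfies the augmented shift
invariance `J₁^{nc} A^{nc} Φ = J₂^{nc} A^{nc}` with block-diagonal augmented selection
matrices `J₁^{nc} = blkdiag(J₁, Π_{M'} J₂ Π_M)`, `J₂^{nc} = blkdiag(J₂, Π_{M'} J₁ Π_M)`. -/
theorem augmented_shift_invariance
    (M M' d : ℕ) (A : Matrix (Fin M) (Fin d) ℂ)
    (μ φ : Fin d → ℝ)
    (J₁ J₂ : Matrix (Fin M') (Fin M) ℝ)
    (Φ Ψ : Matrix (Fin d) (Fin d) ℂ)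
    (hΦ : Φ = Matrix.diagonal fun i => Complex.exp (Complex.I * (μ i : ℂ)))
    (hΨ : Ψ = Matrix.diagonal fun i => Complex.exp (Complex.I * (φ i : ℂ)))
    (hshift : (J₁.map Complex.ofReal) * A * Φ = (J₂.map Complex.ofReal) * A)
    (Anc : Matrix (Fin M ⊕ Fin M) (Fin d) ℂ)
    (hAnc : Anc = Matrix.fromRows A
      (exchg ℂ M * A.map (starRingEnd ℂ) * Ψ.map (starRingEnd ℂ) * Ψ.map (starRingEnd ℂ)))
    (J₁nc J₂nc : Matrix (Fin M' ⊕ Fin M') (Fin M ⊕ Fin M) ℂ)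
    (hJ₁nc : J₁nc = Matrix.fromBlocks (J₁.map Complex.ofReal) 0 0
      (exchg ℂ M' * (J₂.map Complex.ofReal) * exchg ℂ M))
    (hJ₂nc : J₂nc = Matrix.fromBlocks (J₂.map Complex.ofReal) 0 0
      (exchg ℂ M' * (J₁.map Complex.ofReal) * exchg ℂ M)) :
    J₁nc * Anc * Φ = J₂nc * Anc := by
  have hc : (J₁.map Complex.ofReal) * A.map (starRingEnd ℂ) * Φ.map (starRingEnd ℂ)
      = (J₂.map Complex.ofReal) * A.map (starRingEnd ℂ) := by
    have h := congrArg (fun X => X.map (starRingEnd ℂ)) hshift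
    have hr : ∀ J : Matrix (Fin M') (Fin M) ℝ,
        (J.map Complex.ofReal).map (starRingEnd ℂ) = J.map Complex.ofReal := by
      intro J
      ext i j
      simp
    simpa only [Matrix.map_mul, hr] using h
  have hu : Φ.map (starRingEnd ℂ) * Φ = 1 := by
    subst hΦ
    rw [Matrix.diagonal_map (map_zero _), Matrix.diagonal_mul_diagonal, ← Matrix.diagonal_one]
    congr 1
    funext i
    rw [← Complex.exp_conj, ← Complex.exp_add]
    simp
  have hcomm : Ψ.map (starRingEnd ℂ) * Φ = Φ * Ψ.map (starRingEnd ℂ) := by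
    subst hΦ hΨ
    rw [Matrix.diagonal_map (map_zero _), Matrix.diagonal_mul_diagonal,
      Matrix.diagonal_mul_diagonal]
    congr 1
    funext i
    exact mul_comm _ _
  have hkey : (J₂.map Complex.ofReal) * A.map (starRingEnd ℂ) * Φ
      = (J₁.map Complex.ofReal) * A.map (starRingEnd ℂ) := by
    rw [← hc, Matrix.mul_assoc _ _ Φ, hu, Matrix.mul_one]
  have hP : ∀ (J : Matrix (Fin M') (Fin M) ℂ) (B : Matrix (Fin d) (Fin d) ℂ),
      exchg ℂ M' * J * exchg ℂ M * (exchg ℂ M * A.map (starRingEnd ℂ) * B * B)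
        = exchg ℂ M' * (J * A.map (starRingEnd ℂ)) * B * B := by
    intro J B
    calc _ = exchg ℂ M' * J * (exchg ℂ M * exchg ℂ M) * A.map (starRingEnd ℂ) * B * B := by
          simp only [Matrix.mul_assoc]
      _ = _ := by rw [exchg_mul_self_aux, Matrix.mul_one]; simp only [Matrix.mul_assoc]
  subst hAnc hJ₁nc hJ₂nc
  rw [Matrix.fromBlocks_mul_fromRows, Matrix.fromBlocks_mul_fromRows, Matrix.fromRows_mul]
  simp only [Matrix.zero_mul, add_zero, zero_add]
  rw [hshift, hP, hP, ← hkey]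
  congr 1
  rw [Matrix.mul_assoc _ _ Φ, hcomm, ← Matrix.mul_assoc, Matrix.mul_assoc _ _ Φ, hcomm]
  simp only [Matrix.mul_assoc]
end

section
/- Let A ∈ ℂ^{M×d} and Ψ = diag(e^{iφ_1},…,e^{iφ_d}) with all φ_i real. Then the augmented steering matrix A^{nc} = [A ; Π_M·conj(A)·conj(Ψ)·conj(Ψ)] ∈ ℂ^{2M×d} is always centro-symmetric, i.e., Π_{2M}·conj(A^{nc}) = A^{nc}·Ψ·Ψ, where Ψ·Ψ is a unitary diagonal matrix; this holds even if A itself satisfies no centro-symmetry relation. -/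
open Matrix Complex

theorem exchg_mul_apply (M d : ℕ) (B : Matrix (Fin M) (Fin d) ℂ) (i : Fin M) (j : Fin d) :
    (exchg ℂ M * B) i j = B (Fin.rev i) j := by
  rw [Matrix.mul_apply, Finset.sum_eq_single (Fin.rev i)]
  · have h : (i : ℕ) + (Fin.rev i : ℕ) = M - 1 := by
      rw [Fin.val_rev]; omega
    simp only [exchg, Matrix.of_apply, if_pos h, one_mul]
  · intro k _ hk
    have h : ¬ ((i : ℕ) + (k : ℕ) = M - 1) := by
      intro h
      apply hk
      apply Fin.ext
      rw [Fin.val_rev]; omega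
    simp only [exchg, Matrix.of_apply, if_neg h, zero_mul]
  · simp

/-- the augmented steering matrix
`A^{nc} = [A ; Π_M conj(A) conj(Ψ) conj(Ψ)]` is always centro-symmetric:
`Π_{2M} conj(A^{nc}) = A^{nc} Ψ Ψ`, where `Ψ Ψ` is a unitary diagonal matrix —
even if `A` itself satisfies no centro-symmetry relation.
(Here `Π_{2M}` is represented on the index type `Fin M ⊕ Fin M` as the block matrix
`[[0, Π_M],[Π_M, 0]]`.) -/
theorem augmented_steering_centro_symmetric
    (M d : ℕ) (A : Matrix (Fin M) (Fin d) ℂ) (φ : Fin d → ℝ)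
    (Ψ : Matrix (Fin d) (Fin d) ℂ)
    (hΨ : Ψ = Matrix.diagonal fun i => Complex.exp (Complex.I * (φ i : ℂ)))
    (Anc : Matrix (Fin M ⊕ Fin M) (Fin d) ℂ)
    (hAnc : Anc = Matrix.fromRows A
      (exchg ℂ M * A.map (starRingEnd ℂ) * Ψ.map (starRingEnd ℂ) * Ψ.map (starRingEnd ℂ))) :
    (Matrix.fromBlocks 0 (exchg ℂ M) (exchg ℂ M) 0) * Anc.map (starRingEnd ℂ)
      = Anc * Ψ * Ψ ∧ (Ψ * Ψ)ᴴ * (Ψ * Ψ) = 1 ∧ (Ψ * Ψ).IsDiag := by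
  have hu : ∀ j, (starRingEnd ℂ) (Complex.exp (Complex.I * (φ j : ℂ)))
      * Complex.exp (Complex.I * (φ j : ℂ)) = 1 := by
    intro j
    rw [← Complex.exp_conj, ← Complex.exp_add]
    simp
  have hmap : Ψ.map (starRingEnd ℂ) =
      Matrix.diagonal fun i => (starRingEnd ℂ) (Complex.exp (Complex.I * (φ i : ℂ))) := by
    rw [hΨ, Matrix.diagonal_map (map_zero _)]
  rw [hmap] at hAnc
  generalize hc : (fun i => Complex.exp (Complex.I * (φ i : ℂ))) = c at *
  have hc' : ∀ i, Complex.exp (Complex.I * (φ i : ℂ)) = c i := fun i => congrFun hc i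
  simp only [hc'] at hu hAnc
  subst hΨ
  refine ⟨?_, ?_, ?_⟩
  · subst hAnc
    ext i j
    have h := hu j
    rcases i with i | i
    · have e : (Matrix.fromBlocks 0 (exchg ℂ M) (exchg ℂ M) 0 *
          (Matrix.fromRows A (exchg ℂ M * A.map (starRingEnd ℂ) *
            Matrix.diagonal (fun i => (starRingEnd ℂ) (c i)) *
            Matrix.diagonal (fun i => (starRingEnd ℂ) (c i)))).map (starRingEnd ℂ)) (Sum.inl i) j
          = (exchg ℂ M * (exchg ℂ M * A.map (starRingEnd ℂ) *
            Matrix.diagonal (fun i => (starRingEnd ℂ) (c i)) *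
            Matrix.diagonal (fun i => (starRingEnd ℂ) (c i))).map (starRingEnd ℂ)) i j := by
        generalize exchg ℂ M * A.map (starRingEnd ℂ) *
            Matrix.diagonal (fun i => (starRingEnd ℂ) (c i)) *
            Matrix.diagonal (fun i => (starRingEnd ℂ) (c i)) = B
        simp [Matrix.mul_apply, Fintype.sum_sum_type]
      rw [e, exchg_mul_apply]
      simp only [Matrix.map_apply, Matrix.mul_diagonal, exchg_mul_apply, Fin.rev_rev, map_mul,
        Complex.conj_conj, Matrix.fromRows_apply_inl]
    · have e : (Matrix.fromBlocks 0 (exchg ℂ M) (exchg ℂ M) 0 *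
          (Matrix.fromRows A (exchg ℂ M * A.map (starRingEnd ℂ) *
            Matrix.diagonal (fun i => (starRingEnd ℂ) (c i)) *
            Matrix.diagonal (fun i => (starRingEnd ℂ) (c i)))).map (starRingEnd ℂ)) (Sum.inr i) j
          = (exchg ℂ M * A.map (starRingEnd ℂ)) i j := by
        simp [Matrix.mul_apply, Fintype.sum_sum_type]
      rw [e]
      simp only [Matrix.mul_diagonal, Matrix.fromRows_apply_inr]
      generalize (exchg ℂ M * A.map (starRingEnd ℂ)) i j = x
      linear_combination (-x * ((starRingEnd ℂ) (c j) * c j) - x) * h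
  · rw [Matrix.diagonal_mul_diagonal, Matrix.diagonal_conjTranspose,
      Matrix.diagonal_mul_diagonal, ← Matrix.diagonal_one]
    congr 1
    funext j
    have h := hu j
    simp only [Pi.star_apply, ← starRingEnd_apply, map_mul]
    linear_combination ((starRingEnd ℂ) (c j) * c j + 1) * h
  · rw [Matrix.diagonal_mul_diagonal]
    exact Matrix.isDiag_diagonal _
end

section
/- Let J_1, J_2 be real p×m matrices satisfying J_1 = Π_p·J_2·Π_m, and let Q_p ∈ ℂ^{p×p} and Q_m ∈ ℂ^{m×m} be left Π-real matrices (Π_p·conj(Q_p) = Q_p and Π_m·conj(Q_m) = Q_m). Then the transformed selection matrices satisfy 2·Re(Q_p^H·J_2·Q_m) = Q_p^H·(J_1 + J_2)·Q_m and 2·Im(Q_p^H·J_2·Q_m) = i·Q_p^H·(J_1 − J_2)·Q_m, where both left-hand sides are the entrywise real and imaginary parts regarded as complex matrices; in particular i·Q_p^H·(J_1 − J_2)·Q_m has real entries. -/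
open Matrix Complex

theorem exchg_mul_of_left_real (n : ℕ) (Q : Matrix (Fin n) (Fin n) ℂ)
    (hQ : exchg ℂ n * Q.map (starRingEnd ℂ) = Q) :
    exchg ℂ n * Q = Q.map (starRingEnd ℂ) := by
  have h := congrArg (fun M : Matrix (Fin n) (Fin n) ℂ => M.map (starRingEnd ℂ)) hQ
  simp only [Matrix.map_mul] at h
  rw [← h]
  congr 1
  · ext i j
    simp only [exchg, Matrix.map_apply, Matrix.of_apply]
    split_ifs <;> simp
  · ext i j
    simp

theorem exchg_conjTranspose (n : ℕ) : (exchg ℂ n)ᴴ = exchg ℂ n := by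
  ext i j
  simp only [exchg, Matrix.conjTranspose_apply, Matrix.of_apply, add_comm (j : ℕ)]
  split_ifs <;> simp

theorem exchg_map (n : ℕ) : (exchg ℝ n).map Complex.ofReal = exchg ℂ n := by
  ext i j
  simp only [exchg, Matrix.map_apply, Matrix.of_apply]
  split_ifs <;> simp

/-- if the real selection matrices satisfy `J₁ = Π_p J₂ Π_m` and
`Q_p`, `Q_m` are left `Π`-real, then the transformed selection matrices satisfy
`2 Re(Q_pᴴ J₂ Q_m) = Q_pᴴ (J₁ + J₂) Q_m` and
`2 Im(Q_pᴴ J₂ Q_m) = i Q_pᴴ (J₁ − J₂) Q_m`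
(entrywise real and imaginary parts regarded as complex matrices); in particular
`i Q_pᴴ (J₁ − J₂) Q_m` has real entries. -/
theorem transformed_selection_matrices
    (p m : ℕ) (J₁ J₂ : Matrix (Fin p) (Fin m) ℝ)
    (hJ : J₁ = exchg ℝ p * J₂ * exchg ℝ m)
    (Qp : Matrix (Fin p) (Fin p) ℂ) (Qm : Matrix (Fin m) (Fin m) ℂ)
    (hQp : exchg ℂ p * Qp.map (starRingEnd ℂ) = Qp)
    (hQm : exchg ℂ m * Qm.map (starRingEnd ℂ) = Qm) :
    (2 : ℂ) • ((Qpᴴ * J₂.map Complex.ofReal * Qm).map fun z => ((z.re : ℝ) : ℂ))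
        = Qpᴴ * (J₁.map Complex.ofReal + J₂.map Complex.ofReal) * Qm ∧
    (2 : ℂ) • ((Qpᴴ * J₂.map Complex.ofReal * Qm).map fun z => ((z.im : ℝ) : ℂ))
        = Complex.I • (Qpᴴ * (J₁.map Complex.ofReal - J₂.map Complex.ofReal) * Qm) ∧
    ∀ a b, ((Complex.I • (Qpᴴ * (J₁.map Complex.ofReal - J₂.map Complex.ofReal) * Qm)) a b).im = 0 := by
  have hmap : J₁.map Complex.ofReal
      = exchg ℂ p * J₂.map Complex.ofReal * exchg ℂ m := by
    have h1 : (exchg ℝ p * J₂ * exchg ℝ m).map Complex.ofRealHom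
        = (exchg ℝ p).map Complex.ofRealHom * J₂.map Complex.ofRealHom
          * (exchg ℝ m).map Complex.ofRealHom := by
      rw [Matrix.map_mul, Matrix.map_mul]
    rw [← exchg_map, ← exchg_map, hJ]
    exact h1
  have hp := exchg_mul_of_left_real p Qp hQp
  have hm := exchg_mul_of_left_real m Qm hQm
  have hp' : Qpᴴ * exchg ℂ p = (Qpᴴ).map (starRingEnd ℂ) := by
    have h := congrArg Matrix.conjTranspose hp
    rw [Matrix.conjTranspose_mul, exchg_conjTranspose] at h
    rw [h]
    ext i j
    simp
  have hJc : (J₂.map Complex.ofReal).map (starRingEnd ℂ) = J₂.map Complex.ofReal := by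
    ext i j
    simp
  have key : Qpᴴ * J₁.map Complex.ofReal * Qm
      = (Qpᴴ * J₂.map Complex.ofReal * Qm).map (starRingEnd ℂ) := by
    rw [Matrix.map_mul, Matrix.map_mul, hJc, ← hp', ← hm, hmap]
    simp only [Matrix.mul_assoc]
  have him : (2 : ℂ) • ((Qpᴴ * J₂.map Complex.ofReal * Qm).map fun z => ((z.im : ℝ) : ℂ))
      = Complex.I • (Qpᴴ * (J₁.map Complex.ofReal - J₂.map Complex.ofReal) * Qm) := by
    rw [Matrix.mul_sub, Matrix.sub_mul, key]
    generalize Qpᴴ * J₂.map Complex.ofReal * Qm = A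
    ext i j
    apply Complex.ext <;> simp
    ring
  refine ⟨?_, him, ?_⟩
  · rw [Matrix.mul_add, Matrix.add_mul, key]
    generalize Qpᴴ * J₂.map Complex.ofReal * Qm = A
    ext i j
    apply Complex.ext <;> simp
    ring
  · intro a b
    rw [← him]
    simp
end

section
/- Let U ∈ ℂ^{m×d} and let J_1, J_2 be complex p×m matrices satisfying the shift invariance relation J_1·U·Φ = J_2·U, where Φ = diag(e^{iμ_1},…,e^{iμ_d}) with all μ_i real and cos(μ_i/2) ≠ 0 for every i. Then the real-valued shift invariance relation (J_1 + J_2)·U·Ω = i·(J_1 − J_2)·U holds, where Ω = diag(tan(μ_1/2),…,tan(μ_d/2)) (regarded as a complex diagonal matrix with real entries). -/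
open Matrix Complex

/-- if `J₁ U Φ = J₂ U` with `Φ = diag(e^{iμ_1},…,e^{iμ_d})`, all `μ_i`
real and `cos(μ_i/2) ≠ 0`, then the real-valued shift invariance relation
`(J₁ + J₂) U Ω = i (J₁ − J₂) U` holds with `Ω = diag(tan(μ_1/2),…,tan(μ_d/2))`. -/
theorem real_valued_shift_invariance
    (m d p : ℕ) (U : Matrix (Fin m) (Fin d) ℂ)
    (J₁ J₂ : Matrix (Fin p) (Fin m) ℂ) (μ : Fin d → ℝ)
    (hcos : ∀ i, Real.cos (μ i / 2) ≠ 0)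
    (hshift : J₁ * U * Matrix.diagonal (fun i => Complex.exp (Complex.I * (μ i : ℂ)))
      = J₂ * U) :
    (J₁ + J₂) * U * Matrix.diagonal (fun i => ((Real.tan (μ i / 2) : ℝ) : ℂ))
      = Complex.I • ((J₁ - J₂) * U) := by
  have key : ∀ j, (1 + Complex.exp (Complex.I * (μ j : ℂ))) * ((Real.tan (μ j / 2) : ℝ) : ℂ)
      = Complex.I * (1 - Complex.exp (Complex.I * (μ j : ℂ))) := by
    intro j
    have he : Complex.exp (Complex.I * (μ j : ℂ))
        = (((Real.cos (μ j / 2) : ℝ) : ℂ) + ((Real.sin (μ j / 2) : ℝ) : ℂ) * Complex.I) ^ 2 := by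
      rw [Complex.ofReal_cos, Complex.ofReal_sin, ← Complex.exp_mul_I, ← Complex.exp_nat_mul]
      congr 1
      push_cast
      ring
    have hc : ((Real.cos (μ j / 2) : ℝ) : ℂ) ≠ 0 := by exact_mod_cast hcos j
    have hsc : ((Real.sin (μ j / 2) : ℝ) : ℂ) ^ 2 + ((Real.cos (μ j / 2) : ℝ) : ℂ) ^ 2 = 1 := by
      exact_mod_cast Real.sin_sq_add_cos_sq (μ j / 2)
    rw [he, Real.tan_eq_sin_div_cos, Complex.ofReal_div]
    generalize ((Real.cos (μ j / 2) : ℝ) : ℂ) = c at *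
    generalize ((Real.sin (μ j / 2) : ℝ) : ℂ) = s at *
    rw [← mul_div_assoc, div_eq_iff hc]
    linear_combination (Complex.I * c - s) * hsc
      + (s ^ 3 + 2 * c ^ 2 * s + Complex.I * c * s ^ 2) * Complex.I_sq
  rw [Matrix.add_mul, Matrix.sub_mul, ← hshift]
  ext a j
  simp only [Matrix.mul_diagonal, Matrix.add_apply, Matrix.sub_apply, Matrix.smul_apply,
    smul_eq_mul]
  linear_combination ((J₁ * U) a j) * key j
end

section
/- Let U ∈ ℂ^{m×d}, let Γ = Q·Λ·Q^{−1} with Q ∈ ℂ^{d×d} invertible and Λ = diag(λ_1,…,λ_d) with λ_i ≠ −1 for all i, and let J_1, J_2 be complex p×m matrices satisfying J_1·U·Γ = J_2·U. Then (J_1 + J_2)·U·(Q·Ω·Q^{−1}) = i·(J_1 − J_2)·U, where Ω = diag(i·(1 − λ_1)/(1 + λ_1),…, i·(1 − λ_d)/(1 + λ_d)). In particular, the matrices solving the complex-valued and the real-valued shift invariance equations have the same eigenvectors Q, and their eigenvalues are related by ω_i = i·(1 − λ_i)/(1 + λ_i). -/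
open Matrix Complex

/-- let `Γ = Q Λ Q⁻¹` with `Q` invertible and
`Λ = diag(λ_1,…,λ_d)`, `λ_i ≠ −1`, and suppose `J₁ U Γ = J₂ U`. Then
`(J₁ + J₂) U (Q Ω Q⁻¹) = i (J₁ − J₂) U` with
`Ω = diag(i(1 − λ_1)/(1 + λ_1),…,i(1 − λ_d)/(1 + λ_d))`: the solutions of the
complex- and real-valued shift invariance equations share the eigenvectors `Q`, with
eigenvalues related by `ω_i = i(1 − λ_i)/(1 + λ_i)`. -/
theorem real_valued_shift_invariance_eigenstructure
    (m d p : ℕ) (U : Matrix (Fin m) (Fin d) ℂ)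
    (J₁ J₂ : Matrix (Fin p) (Fin m) ℂ)
    (Q : Matrix (Fin d) (Fin d) ℂ) (hQ : IsUnit Q.det)
    (lam : Fin d → ℂ) (hlam : ∀ i, lam i ≠ -1)
    (Γ : Matrix (Fin d) (Fin d) ℂ)
    (hΓ : Γ = Q * Matrix.diagonal lam * Q⁻¹)
    (hshift : J₁ * U * Γ = J₂ * U) :
    (J₁ + J₂) * U *
        (Q * Matrix.diagonal (fun i => Complex.I * ((1 - lam i) / (1 + lam i))) * Q⁻¹)
      = Complex.I • ((J₁ - J₂) * U) := by
  set W := Matrix.diagonal (fun i => Complex.I * ((1 - lam i) / (1 + lam i))) with hW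
  have hD : W + Matrix.diagonal lam * W = Complex.I • (1 - Matrix.diagonal lam) := by
    rw [hW, Matrix.diagonal_mul_diagonal, Matrix.diagonal_add, ← Matrix.diagonal_one,
      Matrix.diagonal_sub, ← Matrix.diagonal_smul]
    congr 1
    funext i
    have h : 1 + lam i ≠ 0 := fun h => hlam i (by linear_combination h)
    simp only [Pi.smul_apply, smul_eq_mul]
    field_simp
  have hQ1 : Q⁻¹ * Q = 1 := Matrix.nonsing_inv_mul Q hQ
  have hQ2 : Q * Q⁻¹ = 1 := Matrix.mul_nonsing_inv Q hQ
  have hG : (1 + Γ) * (Q * W * Q⁻¹) = Complex.I • (1 - Γ) := by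
    have h1 : Γ * (Q * W * Q⁻¹) = Q * (Matrix.diagonal lam * W) * Q⁻¹ := by
      calc Γ * (Q * W * Q⁻¹) = Q * Matrix.diagonal lam * (Q⁻¹ * Q) * W * Q⁻¹ := by
            rw [hΓ]; simp only [Matrix.mul_assoc]
        _ = _ := by rw [hQ1]; simp only [Matrix.mul_assoc, Matrix.one_mul]
    rw [add_mul, one_mul, h1, ← add_mul, ← mul_add, hD, mul_smul_comm, smul_mul_assoc,
      mul_sub, sub_mul, mul_one, hQ2, hΓ]
  have h2 : (J₁ + J₂) * U = J₁ * U * (1 + Γ) := by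
    rw [Matrix.add_mul, Matrix.mul_add, hshift, Matrix.mul_one]
  rw [h2, Matrix.mul_assoc, hG, Matrix.mul_smul, Matrix.mul_sub, hshift, Matrix.mul_one,
    Matrix.sub_mul]
end

section
/- Let R ≥ 1, let M_1,…,M_R be positive integers, and let M = M_1·…·M_R. Define the real R×R matrix G_2 by (G_2)_{r,r} = (1/6)·M·(M_r − 1)·(2M_r − 1) and (G_2)_{r_1,r_2} = (1/4)·M·(M_{r_1} − 1)·(M_{r_2} − 1) for r_1 ≠ r_2, and the real vector h ∈ ℝ^R by h_r = −(1/2)·M·(M_r − 1). Then G_2 − (1/M)·h·h^T is the diagonal matrix with diagonal entries (1/12)·M·(M_r² − 1), r = 1,…,R. Consequently, for any real P > 0, σ > 0 and integer N ≥ 1, the matrix (σ²/(2N))·(P·(G_2 − (1/M)·h·h^T))^{−1} is the diagonal matrix with diagonal entries (σ²/(N·P))·6/(M·(M_r² − 1)), i.e., the deterministic R-D NC Cramér–Rao bound for a single strictly non-circular source on an R-D uniform sampling grid. -/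
open Matrix

/-- The matrix `G₂` appearing in the single-source deterministic R-D NC Cramér–Rao
bound computation: `(G₂)_{r,r} = (1/6) M (M_r − 1)(2 M_r − 1)` and
`(G₂)_{r₁,r₂} = (1/4) M (M_{r₁} − 1)(M_{r₂} − 1)` for `r₁ ≠ r₂`, where `M = ∏ M_r`. -/
noncomputable def G2 (R : ℕ) (Mr : Fin R → ℕ) : Matrix (Fin R) (Fin R) ℝ :=
  Matrix.of fun r₁ r₂ =>
    if r₁ = r₂ then
      (1 / 6 : ℝ) * (∏ r, (Mr r : ℝ)) * ((Mr r₁ : ℝ) - 1) * (2 * (Mr r₁ : ℝ) - 1)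
    else
      (1 / 4 : ℝ) * (∏ r, (Mr r : ℝ)) * ((Mr r₁ : ℝ) - 1) * ((Mr r₂ : ℝ) - 1)

/-- The vector `h` with `h_r = −(1/2) M (M_r − 1)`, where `M = ∏ M_r`. -/
noncomputable def hvec (R : ℕ) (Mr : Fin R → ℕ) : Fin R → ℝ :=
  fun r => -(1 / 2 : ℝ) * (∏ r', (Mr r' : ℝ)) * ((Mr r : ℝ) - 1)

/-- `G₂ − (1/M) h hᵀ` is the diagonal matrix with entries
`(1/12) M (M_r² − 1)`; consequently (for `M_r ≥ 2`, ensuring invertibility), for any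
`P > 0`, `σ > 0` and `N ≥ 1`, the matrix `(σ²/(2N)) (P (G₂ − (1/M) h hᵀ))⁻¹` is the
diagonal matrix with entries `(σ²/(N P)) · 6/(M (M_r² − 1))` — the deterministic R-D NC
Cramér–Rao bound for a single strictly non-circular source on an R-D uniform grid. -/
theorem single_source_nc_crb
    (R : ℕ) (hR : 1 ≤ R) (Mr : Fin R → ℕ) (hMr : ∀ r, 0 < Mr r) :
    G2 R Mr - (1 / ∏ r, (Mr r : ℝ)) • Matrix.vecMulVec (hvec R Mr) (hvec R Mr)
      = Matrix.diagonal
          (fun r => (1 / 12 : ℝ) * (∏ r', (Mr r' : ℝ)) * ((Mr r : ℝ) ^ 2 - 1)) ∧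
    ((∀ r, 2 ≤ Mr r) → ∀ (P σ : ℝ), 0 < P → 0 < σ → ∀ N : ℕ, 1 ≤ N →
      (σ ^ 2 / (2 * N)) •
          (P • (G2 R Mr -
            (1 / ∏ r, (Mr r : ℝ)) • Matrix.vecMulVec (hvec R Mr) (hvec R Mr)))⁻¹
        = Matrix.diagonal
            (fun r => (σ ^ 2 / (N * P)) *
              (6 / ((∏ r', (Mr r' : ℝ)) * ((Mr r : ℝ) ^ 2 - 1))))) := by
  have hM : (0 : ℝ) < ∏ r, (Mr r : ℝ) :=
    Finset.prod_pos fun r _ => by exact_mod_cast hMr r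
  have key : G2 R Mr - (1 / ∏ r, (Mr r : ℝ)) • Matrix.vecMulVec (hvec R Mr) (hvec R Mr)
      = Matrix.diagonal
          (fun r => (1 / 12 : ℝ) * (∏ r', (Mr r' : ℝ)) * ((Mr r : ℝ) ^ 2 - 1)) := by
    ext i j
    simp only [G2, hvec, Matrix.sub_apply, Matrix.smul_apply, Matrix.vecMulVec_apply,
      Matrix.of_apply, smul_eq_mul, Matrix.diagonal_apply]
    generalize (∏ r, (Mr r : ℝ)) = M at hM
    have hM' := hM.ne'
    by_cases h : i = j
    · subst h
      simp only [if_true]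
      field_simp
      ring
    · simp only [h, if_false]
      field_simp
      ring
  refine ⟨key, ?_⟩
  intro h2 P σ hP hσ N hN
  rw [key]
  generalize (∏ r, (Mr r : ℝ)) = M at hM
  have hM' := hM.ne'
  have hP' := hP.ne'
  have hN' : (N : ℝ) ≠ 0 := by
    have : N ≠ 0 := by omega
    exact_mod_cast this
  have hd : ∀ r, ((Mr r : ℝ) ^ 2 - 1) ≠ 0 := by
    intro r
    have : (2 : ℝ) ≤ Mr r := by exact_mod_cast h2 r
    nlinarith
  have hinv : (P • Matrix.diagonal (fun r => (1 / 12 : ℝ) * M * ((Mr r : ℝ) ^ 2 - 1)))⁻¹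
      = Matrix.diagonal (fun r => 12 / (P * M * ((Mr r : ℝ) ^ 2 - 1))) := by
    apply Matrix.inv_eq_right_inv
    rw [← Matrix.diagonal_smul, Matrix.diagonal_mul_diagonal, ← Matrix.diagonal_one]
    congr 1
    funext r
    have := hd r
    simp only [Pi.smul_apply, smul_eq_mul]
    field_simp
  rw [hinv, ← Matrix.diagonal_smul]
  congr 1
  funext r
  have := hd r
  simp only [Pi.smul_apply, smul_eq_mul]
  field_simp
  norm_num
end

section
/- Define the asymptotic efficiency η(M) = 6·(M − 1)/(M·(M + 1)) for integers M ≥ 2. Then: (a) η(M) equals the ratio of the single-source deterministic NC Cramér–Rao bound coefficient 6/(M·(M² − 1)) to the single-source ESPRIT MSE coefficient 1/(M − 1)², i.e., (6/(M·(M² − 1)))·(M − 1)² = 6·(M − 1)/(M·(M + 1)); (b) η(2) = 1 and η(3) = 1, so 1-D NC Standard ESPRIT and 1-D NC Unitary ESPRIT with least squares are asymptotically efficient for M = 2 and M = 3; (c) η(M) < 1 for every M ≥ 4; and (d) η(M) → 0 as M → ∞. -/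
/-- The asymptotic efficiency `η(M) = 6(M − 1)/(M(M + 1))` of 1-D NC Standard/Unitary
ESPRIT with least squares for a single strictly non-circular source and an `M`-element
uniform linear array. -/
noncomputable def eta (M : ℕ) : ℝ := 6 * ((M : ℝ) - 1) / ((M : ℝ) * ((M : ℝ) + 1))

/-- (a) `η(M)` equals the ratio of the single-source deterministic NC CRB
coefficient `6/(M(M² − 1))` to the single-source ESPRIT MSE coefficient `1/(M − 1)²`,
i.e. `(6/(M(M² − 1))) (M − 1)² = 6(M − 1)/(M(M + 1))`; (b) `η(2) = 1` and `η(3) = 1`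
(asymptotic efficiency for `M = 2, 3`); (c) `η(M) < 1` for every `M ≥ 4`;
(d) `η(M) → 0` as `M → ∞`. -/
theorem asymptotic_efficiency_single_source :
    (∀ M : ℕ, 2 ≤ M →
      6 / ((M : ℝ) * ((M : ℝ) ^ 2 - 1)) * ((M : ℝ) - 1) ^ 2 = eta M) ∧
    eta 2 = 1 ∧ eta 3 = 1 ∧
    (∀ M : ℕ, 4 ≤ M → eta M < 1) ∧
    Filter.Tendsto (fun M : ℕ => eta M) Filter.atTop (nhds 0) := by
  refine ⟨?_, ?_, ?_, ?_, ?_⟩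
  · intro M hM
    have h : (2 : ℝ) ≤ M := by exact_mod_cast hM
    have h0 : (M : ℝ) ≠ 0 := by linarith
    have h1 : (M : ℝ) - 1 ≠ 0 := by linarith
    have h2 : (M : ℝ) + 1 ≠ 0 := by linarith
    have h3 : (M : ℝ) ^ 2 - 1 = (M - 1) * (M + 1) := by ring
    unfold eta
    rw [h3]
    field_simp
  · norm_num [eta]
  · norm_num [eta]
  · intro M hM
    have h : (4 : ℝ) ≤ M := by exact_mod_cast hM
    unfold eta
    rw [div_lt_one (by positivity)]
    nlinarith
  · refine squeeze_zero' ?_ ?_ (tendsto_const_div_atTop_nhds_zero_nat 6)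
    · filter_upwards [Filter.eventually_ge_atTop 1] with M hM
      have h : (1 : ℝ) ≤ M := by exact_mod_cast hM
      have h1 : 0 ≤ (M : ℝ) - 1 := by linarith
      unfold eta
      positivity
    · filter_upwards [Filter.eventually_ge_atTop 1] with M hM
      have h : (1 : ℝ) ≤ M := by exact_mod_cast hM
      unfold eta
      rw [div_le_div_iff₀ (by positivity) (by positivity)]
      nlinarith
end

section
/- Let M ≥ 2 be an integer and μ, φ real numbers. Let a ∈ ℂ^M with entries a_k = e^{i·k·μ}, k = 0,…,M−1, and let a^{nc} = [a ; e^{−2iφ}·Π_M·conj(a)] ∈ ℂ^{2M}. Let J_1 = [I_{M−1} | 0_{(M−1)×1}] and J_2 = [0_{(M−1)×1} | I_{M−1}] be the (M−1)×M maximum-overlap selection matrices, and define the augmented selection matrices J_1^{nc} = blkdiag(J_1, Π_{M−1}·J_2·Π_M) and J_2^{nc} = blkdiag(J_2, Π_{M−1}·J_1·Π_M). Let P = I_{2M} − (1/(2M))·a^{nc}·(a^{nc})^H be the orthogonal projection onto the orthogonal complement of a^{nc}, and define the row vector v^T = (√(2M)/(2(M−1)))·(a^{nc})^H·(J_1^{nc})^T·(e^{−iμ}·J_2^{nc}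 − J_1^{nc})·P ∈ ℂ^{1×2M}. Then ‖v‖² = 2M/(M−1)² and v^T·Π_{2M}·v = −(2M/(M−1)²)·e^{2iφ}. -/
open Matrix Complex

/-- The ULA steering vector `a ∈ ℂ^M` with entries `a_k = e^{i k μ}`, as a column. -/
noncomputable def avec (M : ℕ) (μ : ℝ) : Matrix (Fin M) (Fin 1) ℂ :=
  Matrix.of fun k _ => Complex.exp (Complex.I * ((k : ℕ) : ℂ) * (μ : ℂ))

/-- The augmented steering vector `a^{nc} = [a ; e^{−2iφ} Π_M conj(a)] ∈ ℂ^{2M}`. -/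
noncomputable def ancvec (M : ℕ) (μ φ : ℝ) : Matrix (Fin M ⊕ Fin M) (Fin 1) ℂ :=
  Matrix.fromRows (avec M μ)
    (Complex.exp (-(2 * (φ : ℂ) * Complex.I)) • (exchg ℂ M * (avec M μ).map (starRingEnd ℂ)))

/-- The maximum-overlap selection matrix `J₁ = [I_{M−1} | 0]`. -/
def Jsel1 (M : ℕ) : Matrix (Fin (M - 1)) (Fin M) ℂ :=
  Matrix.of fun i j => if (j : ℕ) = (i : ℕ) then 1 else 0

/-- The maximum-overlap selection matrix `J₂ = [0 | I_{M−1}]`. -/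
def Jsel2 (M : ℕ) : Matrix (Fin (M - 1)) (Fin M) ℂ :=
  Matrix.of fun i j => if (j : ℕ) = (i : ℕ) + 1 then 1 else 0

/-- The augmented selection matrix `J₁^{nc} = blkdiag(J₁, Π_{M−1} J₂ Π_M)`. -/
noncomputable def J1nc (M : ℕ) : Matrix (Fin (M - 1) ⊕ Fin (M - 1)) (Fin M ⊕ Fin M) ℂ :=
  Matrix.fromBlocks (Jsel1 M) 0 0 (exchg ℂ (M - 1) * Jsel2 M * exchg ℂ M)

/-- The augmented selection matrix `J₂^{nc} = blkdiag(J₂, Π_{M−1} J₁ Π_M)`. -/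
noncomputable def J2nc (M : ℕ) : Matrix (Fin (M - 1) ⊕ Fin (M - 1)) (Fin M ⊕ Fin M) ℂ :=
  Matrix.fromBlocks (Jsel2 M) 0 0 (exchg ℂ (M - 1) * Jsel1 M * exchg ℂ M)

/-- The orthogonal projection `P = I_{2M} − (1/(2M)) a^{nc} (a^{nc})ᴴ` onto the
orthogonal complement of `a^{nc}`. -/
noncomputable def Pperp (M : ℕ) (μ φ : ℝ) : Matrix (Fin M ⊕ Fin M) (Fin M ⊕ Fin M) ℂ :=
  1 - ((1 : ℂ) / (2 * (M : ℂ))) • (ancvec M μ φ * (ancvec M μ φ)ᴴ)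

/-- The row vector
`vᵀ = (√(2M)/(2(M−1))) (a^{nc})ᴴ (J₁^{nc})ᵀ (e^{−iμ} J₂^{nc} − J₁^{nc}) P ∈ ℂ^{1×2M}`
from the single-source ESPRIT error computation. -/
noncomputable def vT (M : ℕ) (μ φ : ℝ) : Matrix (Fin 1) (Fin M ⊕ Fin M) ℂ :=
  (((Real.sqrt (2 * M) : ℝ) : ℂ) / (2 * ((M : ℂ) - 1))) •
    ((ancvec M μ φ)ᴴ * (J1nc M)ᵀ *
      (Complex.exp (-(Complex.I * (μ : ℂ))) • J2nc M - J1nc M) * Pperp M μ φ)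

/-- The `2M × 2M` exchange matrix `Π_{2M}`, represented on the index type
`Fin M ⊕ Fin M` as the block matrix `[[0, Π_M],[Π_M, 0]]`. -/
def Pi2M (M : ℕ) : Matrix (Fin M ⊕ Fin M) (Fin M ⊕ Fin M) ℂ :=
  Matrix.fromBlocks 0 (exchg ℂ M) (exchg ℂ M) 0

theorem exchg_mul_apply_s18 (n : ℕ) {κ : Type*} (A : Matrix (Fin n) κ ℂ) (i : Fin n) (k : κ) :
    (exchg ℂ n * A) i k = A i.rev k := by
  rw [Matrix.mul_apply, Finset.sum_eq_single i.rev]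
  · simp only [exchg, Matrix.of_apply, Fin.val_rev]
    rw [if_pos (by omega), one_mul]
  · intro b _ hb
    simp only [exchg, Matrix.of_apply]
    rw [if_neg, zero_mul]
    intro h
    apply hb
    ext
    rw [Fin.val_rev]
    omega
  · simp

theorem mul_exchg_apply (n : ℕ) {κ : Type*} (A : Matrix κ (Fin n) ℂ) (i : Fin n) (k : κ) :
    (A * exchg ℂ n) k i = A k i.rev := by
  rw [Matrix.mul_apply, Finset.sum_eq_single i.rev]
  · simp only [exchg, Matrix.of_apply, Fin.val_rev]
    rw [if_pos (by omega), mul_one]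
  · intro b _ hb
    simp only [exchg, Matrix.of_apply]
    rw [if_neg, mul_zero]
    intro h
    apply hb
    ext
    rw [Fin.val_rev]
    omega
  · simp

theorem flip_Jsel2 (M : ℕ) : exchg ℂ (M - 1) * Jsel2 M * exchg ℂ M = Jsel1 M := by
  ext i j
  rw [mul_exchg_apply, exchg_mul_apply_s18]
  simp only [Jsel1, Jsel2, Matrix.of_apply, Fin.val_rev]
  congr 1
  apply propext
  omega

theorem flip_Jsel1 (M : ℕ) : exchg ℂ (M - 1) * Jsel1 M * exchg ℂ M = Jsel2 M := by
  ext i j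
  rw [mul_exchg_apply, exchg_mul_apply_s18]
  simp only [Jsel1, Jsel2, Matrix.of_apply, Fin.val_rev]
  congr 1
  apply propext
  omega

/-- Row `conj(f)` through `J₁ᵀ (e J₂ - J₁)`. -/
theorem block_row (N : ℕ) (e : ℂ) (f : ℕ → ℂ) (hf : ∀ n, e * f n = f (n + 1))
    (A : Matrix (Fin 1) (Fin (N + 2)) ℂ) (hA : ∀ j, A 0 j = f j) (j : Fin (N + 2)) :
    (A * (Jsel1 (N + 2))ᵀ * (e • Jsel2 (N + 2) - Jsel1 (N + 2))) 0 j
      = f j * ((if j = Fin.last (N + 1) then 1 else 0) - (if j = 0 then 1 else 0)) := by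
  have h1 : ∀ i : Fin (N + 2 - 1), (A * (Jsel1 (N + 2))ᵀ) 0 i = f i := by
    intro i
    rw [Matrix.mul_apply, Finset.sum_eq_single (⟨i, by omega⟩ : Fin (N + 2))]
    · simp [Jsel1, hA]
    · intro b _ hb
      simp only [Jsel1, Matrix.transpose_apply, Matrix.of_apply]
      rw [if_neg, mul_zero]
      intro h
      exact hb (Fin.ext h)
    · simp
  rw [Matrix.mul_apply]
  simp only [h1, Matrix.sub_apply, Matrix.smul_apply, smul_eq_mul, mul_sub, Finset.sum_sub_distrib]
  have h2 : ∑ i : Fin (N + 2 - 1), f i * (e * Jsel2 (N + 2) i j) = f j * (1 - if j = 0 then 1 else 0) := by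
    by_cases hj : j = 0
    · subst hj
      simp [Jsel2]
    · have hj' : (j : ℕ) ≠ 0 := fun h => hj (Fin.ext h)
      rw [Finset.sum_eq_single (⟨j - 1, by omega⟩ : Fin (N + 2 - 1))]
      · have : (j : ℕ) = j - 1 + 1 := by omega
        simp only [Jsel2, Matrix.of_apply]
        rw [if_pos this, if_neg hj, mul_one, sub_zero, mul_one, mul_comm, hf, ← this]
      · intro b _ hb
        simp only [Jsel2, Matrix.of_apply]
        rw [if_neg, mul_zero, mul_zero]
        intro h
        apply hb
        ext
        simp only
        omega
      · simp
  have h3 : ∑ i : Fin (N + 2 - 1), f i * Jsel1 (N + 2) i j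
      = f j * (1 - if j = Fin.last (N + 1) then 1 else 0) := by
    by_cases hj : j = Fin.last (N + 1)
    · subst hj
      simp only [if_true, sub_self, mul_zero]
      apply Finset.sum_eq_zero
      intro i _
      simp only [Jsel1, Matrix.of_apply, Fin.val_last]
      rw [if_neg (by omega), mul_zero]
    · have hj' : (j : ℕ) ≠ N + 1 := fun h => hj (Fin.ext h)
      rw [Finset.sum_eq_single (⟨j, by omega⟩ : Fin (N + 2 - 1))]
      · simp [Jsel1, hj]
      · intro b _ hb
        simp only [Jsel1, Matrix.of_apply]
        rw [if_neg, mul_zero]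
        intro h
        exact hb (Fin.ext h.symm)
      · simp
  rw [h2, h3]
  ring

theorem anc_inl (M : ℕ) (μ φ : ℝ) (j : Fin M) :
    ancvec M μ φ (Sum.inl j) 0 = cexp (I * (j : ℕ) * μ) := by
  simp [ancvec, avec]

theorem anc_inr (M : ℕ) (μ φ : ℝ) (j : Fin M) :
    ancvec M μ φ (Sum.inr j) 0 = cexp (-(2 * φ * I)) * cexp (-(I * (j.rev : ℕ) * μ)) := by
  simp only [ancvec, Matrix.fromRows_apply_inr, Matrix.smul_apply, exchg_mul_apply_s18, smul_eq_mul,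
    Matrix.map_apply, avec, Matrix.of_apply, ← Complex.exp_conj]
  simp

theorem star_anc_inl (M : ℕ) (μ φ : ℝ) (j : Fin M) :
    star (ancvec M μ φ (Sum.inl j) 0) = cexp (-(I * (j : ℕ) * μ)) := by
  rw [anc_inl, Complex.star_def, ← Complex.exp_conj]
  simp

theorem star_anc_inr (M : ℕ) (μ φ : ℝ) (j : Fin M) :
    star (ancvec M μ φ (Sum.inr j) 0) = cexp (2 * φ * I) * cexp (I * (j.rev : ℕ) * μ) := by
  rw [anc_inr, Complex.star_def, map_mul, ← Complex.exp_conj, ← Complex.exp_conj]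
  simp [Complex.conj_ofNat]

/-- Sign pattern `δ_{M-1} - δ_0`. -/
noncomputable def dsg (N : ℕ) (j : Fin (N + 2)) : ℂ :=
  (if j = Fin.last (N + 1) then 1 else 0) - (if j = 0 then 1 else 0)

theorem sum_dsg (N : ℕ) : ∑ j, dsg N j = 0 := by
  simp [dsg]

theorem dsg_rev (N : ℕ) (j : Fin (N + 2)) : dsg N j.rev = - dsg N j := by
  have h1 : j.rev = Fin.last (N + 1) ↔ j = 0 := by
    rw [Fin.rev_eq_iff, Fin.rev_last]
  have h2 : j.rev = 0 ↔ j = Fin.last (N + 1) := by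
    rw [Fin.rev_eq_iff, Fin.rev_zero]
  simp only [dsg, h1, h2]
  ring

theorem sum_dsg_sq (N : ℕ) : ∑ j, dsg N j * dsg N j = 2 := by
  have h : ∀ j, dsg N j * dsg N j
      = (if j = Fin.last (N + 1) then 1 else 0) + (if j = 0 then 1 else 0) := by
    intro j
    unfold dsg
    by_cases h1 : j = Fin.last (N + 1)
    · have h2 : j ≠ 0 := by
        rw [h1]
        exact (Fin.last_pos).ne'
      simp [h1]
    · by_cases h2 : j = 0 <;> simp [h1, h2]
  simp only [h, Finset.sum_add_distrib]
  simp
  norm_num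

theorem dsg_conj (N : ℕ) (j : Fin (N + 2)) : (starRingEnd ℂ) (dsg N j) = dsg N j := by
  unfold dsg
  split_ifs <;> simp

noncomputable def urow (M : ℕ) (μ φ : ℝ) : Matrix (Fin 1) (Fin M ⊕ Fin M) ℂ :=
  (ancvec M μ φ)ᴴ * (J1nc M)ᵀ * (Complex.exp (-(Complex.I * (μ : ℂ))) • J2nc M - J1nc M)

theorem urow_split (M : ℕ) (μ φ : ℝ) :
    urow M μ φ = Matrix.fromCols
      ((Matrix.of fun _ j => star (ancvec M μ φ (Sum.inl j) 0)) * (Jsel1 M)ᵀ *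
        (Complex.exp (-(Complex.I * (μ : ℂ))) • Jsel2 M - Jsel1 M))
      ((Matrix.of fun _ j => star (ancvec M μ φ (Sum.inr j) 0)) * (Jsel1 M)ᵀ *
        (Complex.exp (-(Complex.I * (μ : ℂ))) • Jsel2 M - Jsel1 M)) := by
  have h : (ancvec M μ φ)ᴴ = Matrix.fromCols
      (Matrix.of fun _ j => star (ancvec M μ φ (Sum.inl j) 0))
      (Matrix.of fun _ j => star (ancvec M μ φ (Sum.inr j) 0)) := by
    ext i j
    fin_cases i
    cases j <;> simp [Matrix.conjTranspose_apply]
  unfold urow J1nc J2nc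
  rw [h, flip_Jsel1, flip_Jsel2, Matrix.fromBlocks_transpose, Matrix.fromBlocks_smul,
    sub_eq_add_neg, Matrix.fromBlocks_neg, Matrix.fromBlocks_add, Matrix.fromCols_mul_fromBlocks, Matrix.fromCols_mul_fromBlocks]
  simp [sub_eq_add_neg]

theorem urow_inl (N : ℕ) (μ φ : ℝ) (j : Fin (N + 2)) :
    urow (N + 2) μ φ 0 (Sum.inl j) = star (ancvec (N + 2) μ φ (Sum.inl j) 0) * dsg N j := by
  rw [urow_split, Matrix.fromCols_apply_inl,
    block_row N _ (fun n => cexp (-(I * (n : ℕ) * μ))) _ _ _ j, star_anc_inl, dsg]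
  · intro n
    rw [← Complex.exp_add]
    congr 1
    push_cast
    ring
  · intro j
    rw [Matrix.of_apply, star_anc_inl]

theorem urow_inr (N : ℕ) (μ φ : ℝ) (j : Fin (N + 2)) :
    urow (N + 2) μ φ 0 (Sum.inr j) = star (ancvec (N + 2) μ φ (Sum.inr j) 0) * dsg N j := by
  have key : ∀ j : Fin (N + 2), cexp (I * (j.rev : ℕ) * μ)
      = cexp (I * ((N : ℂ) + 1 - (j : ℕ)) * μ) := by
    intro j
    have : ((j.rev : ℕ) : ℂ) = (N : ℂ) + 1 - (j : ℕ) := by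
      rw [eq_sub_iff_add_eq]
      have : (j.rev : ℕ) + (j : ℕ) = N + 1 := by
        rw [Fin.val_rev]
        omega
      exact_mod_cast this
    rw [this]
  rw [urow_split, Matrix.fromCols_apply_inr,
    block_row N _ (fun n => cexp (2 * φ * I) * cexp (I * ((N : ℂ) + 1 - (n : ℕ)) * μ)) _ _ _ j,
    star_anc_inr, dsg, key]
  · intro n
    rw [← Complex.exp_add, ← Complex.exp_add, ← Complex.exp_add]
    congr 1
    push_cast
    ring
  · intro j
    rw [Matrix.of_apply, star_anc_inr, key]

theorem star_anc_mul (M : ℕ) (μ φ : ℝ) (s : Fin M ⊕ Fin M) :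
    star (ancvec M μ φ s 0) * ancvec M μ φ s 0 = 1 := by
  cases s with
  | inl j => rw [star_anc_inl, anc_inl, ← Complex.exp_add, neg_add_cancel, Complex.exp_zero]
  | inr j =>
    rw [star_anc_inr, anc_inr, ← Complex.exp_add, ← Complex.exp_add, ← Complex.exp_add,
      ← Complex.exp_zero]
    congr 1
    ring

theorem urow_mul_anc (N : ℕ) (μ φ : ℝ) : urow (N + 2) μ φ * ancvec (N + 2) μ φ = 0 := by
  ext i k
  fin_cases i
  fin_cases k
  simp only [Fin.zero_eta, Matrix.mul_apply, Fintype.sum_sum_type, urow_inl, urow_inr,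
    mul_right_comm _ (dsg N _), star_anc_mul, one_mul, sum_dsg]
  simp

theorem vT_eq (N : ℕ) (μ φ : ℝ) : vT (N + 2) μ φ =
    (((Real.sqrt (2 * (N + 2 : ℕ)) : ℝ) : ℂ) / (2 * (((N + 2 : ℕ) : ℂ) - 1))) •
      urow (N + 2) μ φ := by
  have : urow (N + 2) μ φ * Pperp (N + 2) μ φ = urow (N + 2) μ φ := by
    rw [Pperp, Matrix.mul_sub, Matrix.mul_one, Matrix.mul_smul, ← Matrix.mul_assoc, urow_mul_anc]
    simp
  rw [vT]
  congr 1

theorem sum_normSq_urow (N : ℕ) (μ φ : ℝ) : ∑ j, Complex.normSq (urow (N + 2) μ φ 0 j) = 4 := by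
  have h : ∀ (s) (j : Fin (N + 2)), ((Complex.normSq (star (ancvec (N + 2) μ φ s 0) * dsg N j) : ℝ) : ℂ)
      = dsg N j * dsg N j := by
    intro s j
    rw [← Complex.mul_conj, map_mul, dsg_conj, ← Complex.star_def, star_star]
    linear_combination (dsg N j * dsg N j) * star_anc_mul (N + 2) μ φ s
  have : ((∑ j, Complex.normSq (urow (N + 2) μ φ 0 j) : ℝ) : ℂ) = 4 := by
    rw [Complex.ofReal_sum, Fintype.sum_sum_type]
    simp only [urow_inl, urow_inr, h, sum_dsg_sq]
    norm_num
  exact_mod_cast this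

theorem urow_quad (N : ℕ) (μ φ : ℝ) :
    (urow (N + 2) μ φ * Pi2M (N + 2) * (urow (N + 2) μ φ)ᵀ) 0 0
      = -4 * cexp (2 * φ * I) := by
  have h1 : ∀ j, (urow (N + 2) μ φ * Pi2M (N + 2)) 0 (Sum.inl j)
      = urow (N + 2) μ φ 0 (Sum.inr j.rev) := by
    intro j
    have h := mul_exchg_apply _ (Matrix.of fun (i : Fin 1) j => urow (N + 2) μ φ i (Sum.inr j)) j 0
    rw [Matrix.of_apply] at h
    rw [← h]
    simp [Matrix.mul_apply, Pi2M]
  have h2 : ∀ j, (urow (N + 2) μ φ * Pi2M (N + 2)) 0 (Sum.inr j)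
      = urow (N + 2) μ φ 0 (Sum.inl j.rev) := by
    intro j
    have h := mul_exchg_apply _ (Matrix.of fun (i : Fin 1) j => urow (N + 2) μ φ i (Sum.inl j)) j 0
    rw [Matrix.of_apply] at h
    rw [← h]
    simp [Matrix.mul_apply, Pi2M]
  have e1 : ∀ z : ℂ, cexp z * cexp (-z) = 1 := by
    intro z
    rw [← Complex.exp_add, add_neg_cancel, Complex.exp_zero]
  have h3 : ∀ j, urow (N + 2) μ φ 0 (Sum.inr j.rev) * urow (N + 2) μ φ 0 (Sum.inl j)
      = -cexp (2 * φ * I) * (dsg N j * dsg N j) := by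
    intro j
    rw [urow_inl, urow_inr, star_anc_inl, star_anc_inr, Fin.rev_rev, dsg_rev]
    linear_combination (-cexp (2 * φ * I) * (dsg N j * dsg N j)) * e1 (I * (j : ℕ) * μ)
  have h4 : ∀ j, urow (N + 2) μ φ 0 (Sum.inl j.rev) * urow (N + 2) μ φ 0 (Sum.inr j)
      = -cexp (2 * φ * I) * (dsg N j * dsg N j) := by
    intro j
    rw [urow_inl, urow_inr, star_anc_inl, star_anc_inr, dsg_rev]
    linear_combination (-cexp (2 * φ * I) * (dsg N j * dsg N j)) * e1 (I * (j.rev : ℕ) * μ)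
  rw [Matrix.mul_apply, Fintype.sum_sum_type]
  simp only [Matrix.transpose_apply, h1, h2, h3, h4, ← Finset.mul_sum, sum_dsg_sq]
  ring

/-- for `M ≥ 2` and real `μ, φ`, the row vector `vᵀ` of the
single-source NC ESPRIT error computation satisfies `‖v‖² = 2M/(M − 1)²` and
`vᵀ Π_{2M} v = −(2M/(M − 1)²) e^{2iφ}`. -/
theorem single_source_error_vector (M : ℕ) (hM : 2 ≤ M) (μ φ : ℝ) :
    (∑ j, Complex.normSq (vT M μ φ 0 j)) = 2 * (M : ℝ) / ((M : ℝ) - 1) ^ 2 ∧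
    (vT M μ φ * Pi2M M * (vT M μ φ)ᵀ) 0 0
      = -(2 * (M : ℂ) / ((M : ℂ) - 1) ^ 2) * Complex.exp (2 * (φ : ℂ) * Complex.I) := by
  obtain ⟨N, rfl⟩ : ∃ N, M = N + 2 := ⟨M - 2, by omega⟩
  have hr : ((N + 2 : ℕ) : ℝ) - 1 ≠ 0 := by
    push_cast
    have : (0 : ℝ) ≤ N := Nat.cast_nonneg N
    intro h
    linarith
  have hs : Real.sqrt (2 * (N + 2 : ℕ)) * Real.sqrt (2 * (N + 2 : ℕ)) = 2 * (N + 2 : ℕ) :=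
    Real.mul_self_sqrt (by positivity)
  have hc : ((N + 2 : ℕ) : ℂ) - 1 ≠ 0 := by exact_mod_cast hr
  have hsc : ((Real.sqrt (2 * (N + 2 : ℕ)) : ℝ) : ℂ) * ((Real.sqrt (2 * (N + 2 : ℕ)) : ℝ) : ℂ)
      = 2 * ((N + 2 : ℕ) : ℂ) := by exact_mod_cast hs
  rw [vT_eq]
  generalize hq : Real.sqrt (2 * (N + 2 : ℕ)) = q at *
  constructor
  · simp only [Matrix.smul_apply, smul_eq_mul, Complex.normSq_mul, ← Finset.mul_sum,
      sum_normSq_urow]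
    have : (q : ℂ) / (2 * (((N + 2 : ℕ) : ℂ) - 1)) = ((q / (2 * (((N + 2 : ℕ) : ℝ) - 1)) : ℝ) : ℂ) := by
      push_cast
      rfl
    rw [this, Complex.normSq_ofReal]
    generalize ((N + 2 : ℕ) : ℝ) = m at *
    field_simp
    linear_combination 4 * hs
  · rw [Matrix.transpose_smul, Matrix.smul_mul, Matrix.smul_mul, Matrix.mul_smul,
      Matrix.smul_apply, Matrix.smul_apply, urow_quad, smul_eq_mul, smul_eq_mul]
    generalize ((N + 2 : ℕ) : ℂ) = m at *
    field_simp
    linear_combination (-4) * hsc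
end
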